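/- The set of pairs (k,p) with k ∈ ℚ^4, p ∈ ℚ^12, all entries nonnegative, and p satisfying the 70 inequalities with right-hand sides given by k, is exactly the set of linear combinations with nonnegative rational coefficients of the 52 fundamental generators. (This is Proposition 4 of the paper: the cone Σ^f_ℚ spanned by the essential signatures of fundamental highest weights of D4 is given by the listed inequalities.) -/

import Mathlib

/-- The 70 linear inequalities defining Σ(k). -/
def SatisfiesIneqs (k : Fin 4 → ℚ) (p : Fin 12 → ℚ) : Prop :=
  p 11 ≤ k 0 ∧
  p 10 ≤ k 1 ∧
  p 8 ≤ k 2 ∧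
  p 3 ≤ k 3 ∧
  p 6 + p 10 + p 11 ≤ k 0 + k 1 ∧
  p 6 + p 7 + p 8 + p 9 + p 11 ≤ k 0 + k 1 + k 2 ∧
  p 6 + p 8 + p 9 + p 10 + p 11 ≤ k 0 + k 1 + k 2 ∧
  p 8 + p 9 + p 10 ≤ k 1 + k 2 ∧
  p 3 + p 4 + p 5 + p 6 + p 11 ≤ k 0 + k 1 + k 3 ∧
  p 3 + p 4 + p 6 + p 10 + p 11 ≤ k 0 + k 1 + k 3 ∧
  p 3 + p 4 + p 10 ≤ k 1 + k 3 ∧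
  p 1 + p 3 + p 4 + p 8 + p 9 ≤ k 1 + k 2 + k 3 ∧
  p 3 + p 4 + p 8 + p 9 + p 10 ≤ k 1 + k 2 + k 3 ∧
  p 2 + p 3 + p 4 + p 5 + p 6 + p 8 + p 11 ≤ k 0 + k 1 + k 2 + k 3 ∧
  p 1 + p 2 + p 3 + p 4 + p 6 + p 8 + p 11 ≤ k 0 + k 1 + k 2 + k 3 ∧
  p 1 + p 2 + p 3 + p 6 + p 7 + p 8 + p 11 ≤ k 0 + k 1 + k 2 + k 3 ∧
  p 1 + p 3 + p 6 + p 7 + p 8 + p 9 + p 11 ≤ k 0 + k 1 + k 2 + k 3 ∧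
  p 3 + p 4 + p 6 + p 8 + p 9 + p 10 + p 11 ≤ k 0 + k 1 + k 2 + k 3 ∧
  p 1 + p 3 + p 4 + p 6 + p 8 + p 9 + p 11 ≤ k 0 + k 1 + k 2 + k 3 ∧
  p 0 + p 2 + p 3 + p 4 + p 5 + p 6 + p 7 + p 8 + p 10 ≤ k 0 + 2 * k 1 + k 2 + k 3 ∧
  p 0 + p 1 + p 2 + p 3 + p 4 + p 6 + p 7 + p 8 + p 10 ≤ k 0 + 2 * k 1 + k 2 + k 3 ∧
  p 2 + p 3 + p 4 + p 5 + p 6 + p 7 + p 8 + p 10 + p 11 ≤ k 0 + 2 * k 1 + k 2 + k 3 ∧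
  p 1 + p 2 + p 3 + p 4 + p 6 + p 7 + p 8 + p 10 + p 11 ≤ k 0 + 2 * k 1 + k 2 + k 3 ∧
  p 0 + p 1 + p 3 + p 4 + p 6 + p 7 + p 8 + p 9 + p 10 ≤ k 0 + 2 * k 1 + k 2 + k 3 ∧
  p 1 + p 3 + p 4 + p 6 + p 7 + p 8 + p 9 + p 10 + p 11 ≤ k 0 + 2 * k 1 + k 2 + k 3 ∧
  p 0 + p 3 + p 4 + p 5 + p 6 + p 7 + p 8 + p 9 + p 10 ≤ k 0 + 2 * k 1 + k 2 + k 3 ∧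
  p 3 + p 4 + p 5 + p 6 + p 7 + p 8 + p 9 + p 10 + p 11 ≤ k 0 + 2 * k 1 + k 2 + k 3 ∧
  p 1 + p 2 + p 3 + p 4 + p 6 + p 7 + 2 * p 8 + p 9 + p 10 + p 11 ≤ k 0 + 2 * k 1 + 2 * k 2 + k 3 ∧
  p 2 + p 3 + p 4 + p 5 + p 6 + p 7 + 2 * p 8 + p 9 + p 10 + p 11 ≤ k 0 + 2 * k 1 + 2 * k 2 + k 3 ∧
  p 0 + p 1 + p 2 + p 3 + p 4 + p 6 + p 7 + 2 * p 8 + p 9 + p 10 ≤ k 0 + 2 * k 1 + 2 * k 2 + k 3 ∧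
  p 0 + p 2 + p 3 + p 4 + p 5 + p 6 + p 7 + 2 * p 8 + p 9 + p 10 ≤ k 0 + 2 * k 1 + 2 * k 2 + k 3 ∧
  p 1 + p 3 + p 4 + p 6 + p 7 + 2 * p 8 + 2 * p 9 + p 10 + p 11 ≤ k 0 + 2 * k 1 + 2 * k 2 + k 3 ∧
  p 1 + p 2 + 2 * p 3 + p 4 + p 5 + p 6 + p 7 + p 8 + p 10 + p 11 ≤ k 0 + 2 * k 1 + k 2 + 2 * k 3 ∧
  p 1 + 2 * p 3 + p 4 + p 5 + p 6 + p 7 + p 8 + p 9 + p 10 + p 11 ≤ k 0 + 2 * k 1 + k 2 + 2 * k 3 ∧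
  p 0 + p 1 + p 2 + 2 * p 3 + p 4 + p 5 + p 6 + p 7 + p 8 + p 10 ≤ k 0 + 2 * k 1 + k 2 + 2 * k 3 ∧
  p 0 + p 1 + 2 * p 3 + p 4 + p 5 + p 6 + p 7 + p 8 + p 9 + p 10 ≤ k 0 + 2 * k 1 + k 2 + 2 * k 3 ∧
  p 1 + p 2 + 2 * p 3 + 2 * p 4 + p 5 + p 6 + p 8 + p 10 + p 11 ≤ k 0 + 2 * k 1 + k 2 + 2 * k 3 ∧
  p 1 + 2 * p 3 + 2 * p 4 + p 5 + p 6 + p 8 + p 9 + p 10 + p 11 ≤ k 0 + 2 * k 1 + k 2 + 2 * k 3 ∧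
  p 2 + p 3 + p 4 + p 5 + 2 * p 6 + p 7 + p 8 + p 10 + 2 * p 11 ≤ 2 * k 0 + 2 * k 1 + k 2 + k 3 ∧
  p 3 + p 4 + p 5 + 2 * p 6 + p 7 + p 8 + p 9 + p 10 + 2 * p 11 ≤ 2 * k 0 + 2 * k 1 + k 2 + k 3 ∧
  p 1 + p 2 + p 3 + p 4 + 2 * p 6 + p 7 + p 8 + p 10 + 2 * p 11 ≤ 2 * k 0 + 2 * k 1 + k 2 + k 3 ∧
  p 1 + p 3 + p 4 + 2 * p 6 + p 7 + p 8 + p 9 + p 10 + 2 * p 11 ≤ 2 * k 0 + 2 * k 1 + k 2 + k 3 ∧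
  p 0 + p 1 + p 2 + 2 * p 3 + p 4 + p 5 + p 6 + p 7 + 2 * p 8 + p 9 + p 10 ≤ k 0 + 2 * k 1 + 2 * k 2 + 2 * k 3 ∧
  p 1 + p 2 + 2 * p 3 + p 4 + p 5 + p 6 + p 7 + 2 * p 8 + p 9 + p 10 + p 11 ≤ k 0 + 2 * k 1 + 2 * k 2 + 2 * k 3 ∧
  p 1 + p 2 + 2 * p 3 + 2 * p 4 + p 5 + p 6 + 2 * p 8 + p 9 + p 10 + p 11 ≤ k 0 + 2 * k 1 + 2 * k 2 + 2 * k 3 ∧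
  p 1 + p 2 + 2 * p 3 + p 4 + p 5 + 2 * p 6 + p 7 + p 8 + p 10 + 2 * p 11 ≤ 2 * k 0 + 2 * k 1 + k 2 + 2 * k 3 ∧
  p 1 + 2 * p 3 + p 4 + p 5 + 2 * p 6 + p 7 + p 8 + p 9 + p 10 + 2 * p 11 ≤ 2 * k 0 + 2 * k 1 + k 2 + 2 * k 3 ∧
  p 1 + p 2 + 2 * p 3 + 2 * p 4 + p 5 + 2 * p 6 + p 8 + p 10 + 2 * p 11 ≤ 2 * k 0 + 2 * k 1 + k 2 + 2 * k 3 ∧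
  p 1 + 2 * p 3 + 2 * p 4 + p 5 + 2 * p 6 + p 8 + p 9 + p 10 + 2 * p 11 ≤ 2 * k 0 + 2 * k 1 + k 2 + 2 * k 3 ∧
  p 1 + p 2 + p 3 + p 4 + 2 * p 6 + p 7 + 2 * p 8 + p 9 + p 10 + 2 * p 11 ≤ 2 * k 0 + 2 * k 1 + 2 * k 2 + k 3 ∧
  p 2 + p 3 + p 4 + p 5 + 2 * p 6 + p 7 + 2 * p 8 + p 9 + p 10 + 2 * p 11 ≤ 2 * k 0 + 2 * k 1 + 2 * k 2 + k 3 ∧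
  p 1 + p 3 + p 4 + 2 * p 6 + p 7 + 2 * p 8 + 2 * p 9 + p 10 + 2 * p 11 ≤ 2 * k 0 + 2 * k 1 + 2 * k 2 + k 3 ∧
  p 1 + p 2 + 2 * p 3 + p 4 + p 5 + 2 * p 6 + p 7 + 2 * p 8 + p 9 + p 10 + 2 * p 11 ≤ 2 * k 0 + 2 * k 1 + 2 * k 2 + 2 * k 3 ∧
  p 1 + p 2 + 2 * p 3 + 2 * p 4 + p 5 + 2 * p 6 + 2 * p 8 + p 9 + p 10 + 2 * p 11 ≤ 2 * k 0 + 2 * k 1 + 2 * k 2 + 2 * k 3 ∧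
  p 1 + p 2 + 2 * p 3 + 2 * p 4 + p 5 + p 6 + p 7 + p 8 + 2 * p 10 + p 11 ≤ k 0 + 3 * k 1 + k 2 + 2 * k 3 ∧
  p 1 + 2 * p 3 + 2 * p 4 + p 5 + p 6 + p 7 + p 8 + p 9 + 2 * p 10 + p 11 ≤ k 0 + 3 * k 1 + k 2 + 2 * k 3 ∧
  p 0 + p 1 + p 2 + 2 * p 3 + 2 * p 4 + p 5 + p 6 + p 7 + p 8 + 2 * p 10 ≤ k 0 + 3 * k 1 + k 2 + 2 * k 3 ∧
  p 0 + p 1 + 2 * p 3 + 2 * p 4 + p 5 + p 6 + p 7 + p 8 + p 9 + 2 * p 10 ≤ k 0 + 3 * k 1 + k 2 + 2 * k 3 ∧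
  p 0 + p 1 + 2 * p 3 + 2 * p 4 + p 5 + p 6 + p 7 + 2 * p 8 + 2 * p 9 + 2 * p 10 ≤ k 0 + 3 * k 1 + 2 * k 2 + 2 * k 3 ∧
  p 1 + 2 * p 3 + 2 * p 4 + p 5 + p 6 + p 7 + 2 * p 8 + 2 * p 9 + 2 * p 10 + p 11 ≤ k 0 + 3 * k 1 + 2 * k 2 + 2 * k 3 ∧
  p 0 + p 1 + 2 * p 3 + 2 * p 4 + p 5 + 2 * p 6 + p 7 + p 8 + p 9 + 2 * p 10 + p 11 ≤ 2 * k 0 + 3 * k 1 + k 2 + 2 * k 3 ∧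
  p 0 + p 1 + p 2 + 2 * p 3 + 2 * p 4 + p 5 + 2 * p 6 + p 7 + p 8 + 2 * p 10 + p 11 ≤ 2 * k 0 + 3 * k 1 + k 2 + 2 * k 3 ∧
  p 0 + p 1 + 2 * p 3 + 2 * p 4 + p 5 + 2 * p 6 + p 7 + 2 * p 8 + 2 * p 9 + 2 * p 10 + p 11 ≤ 2 * k 0 + 3 * k 1 + 2 * k 2 + 2 * k 3 ∧
  p 1 + p 2 + 2 * p 3 + 2 * p 4 + p 5 + p 6 + p 7 + 3 * p 8 + 2 * p 9 + 2 * p 10 + p 11 ≤ k 0 + 3 * k 1 + 3 * k 2 + 2 * k 3 ∧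
  p 0 + p 1 + p 2 + 2 * p 3 + 2 * p 4 + p 5 + p 6 + p 7 + 3 * p 8 + 2 * p 9 + 2 * p 10 ≤ k 0 + 3 * k 1 + 3 * k 2 + 2 * k 3 ∧
  p 1 + p 2 + 2 * p 3 + 2 * p 4 + p 5 + 3 * p 6 + p 7 + p 8 + 2 * p 10 + 3 * p 11 ≤ 3 * k 0 + 3 * k 1 + k 2 + 2 * k 3 ∧
  p 1 + 2 * p 3 + 2 * p 4 + p 5 + 3 * p 6 + p 7 + p 8 + p 9 + 2 * p 10 + 3 * p 11 ≤ 3 * k 0 + 3 * k 1 + k 2 + 2 * k 3 ∧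
  p 1 + p 2 + 2 * p 3 + 2 * p 4 + p 5 + 3 * p 6 + p 7 + 3 * p 8 + 2 * p 9 + 2 * p 10 + 3 * p 11 ≤ 3 * k 0 + 3 * k 1 + 3 * k 2 + 2 * k 3 ∧
  p 0 + p 1 + p 2 + 2 * p 3 + 2 * p 4 + p 5 + 2 * p 6 + p 7 + 3 * p 8 + 2 * p 9 + 2 * p 10 + p 11 ≤ 2 * k 0 + 3 * k 1 + 3 * k 2 + 2 * k 3 ∧
  p 1 + 2 * p 3 + 2 * p 4 + p 5 + 3 * p 6 + p 7 + 2 * p 8 + 2 * p 9 + 2 * p 10 + 3 * p 11 ≤ 3 * k 0 + 3 * k 1 + 2 * k 2 + 2 * k 3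

/-- The 52 fundamental generators in (ℚ^4) × (ℚ^12). -/
def gens : Fin 52 → (Fin 4 → ℚ) × (Fin 12 → ℚ) :=
  ![
    (Pi.single 0 1, 0),
    (Pi.single 0 1, Pi.single 11 1),
    (Pi.single 0 1, Pi.single 7 1),
    (Pi.single 0 1, Pi.single 6 1),
    (Pi.single 0 1, Pi.single 5 1),
    (Pi.single 0 1, Pi.single 2 1),
    (Pi.single 0 1, Pi.single 0 1),
    (Pi.single 0 1, Pi.single 0 1 + Pi.single 11 1),
    (Pi.single 1 1, 0),
    (Pi.single 1 1, Pi.single 10 1),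
    (Pi.single 1 1, Pi.single 9 1),
    (Pi.single 1 1, Pi.single 7 1),
    (Pi.single 1 1, Pi.single 6 1),
    (Pi.single 1 1, Pi.single 5 1),
    (Pi.single 1 1, Pi.single 4 1),
    (Pi.single 1 1, Pi.single 2 1),
    (Pi.single 1 1, Pi.single 1 1),
    (Pi.single 1 1, Pi.single 0 1),
    (Pi.single 1 1, Pi.single 7 1 + Pi.single 10 1),
    (Pi.single 1 1, Pi.single 5 1 + Pi.single 10 1),
    (Pi.single 1 1, Pi.single 2 1 + Pi.single 10 1),
    (Pi.single 1 1, Pi.single 1 1 + Pi.single 10 1),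
    (Pi.single 1 1, Pi.single 0 1 + Pi.single 10 1),
    (Pi.single 1 1, Pi.single 5 1 + Pi.single 9 1),
    (Pi.single 1 1, Pi.single 2 1 + Pi.single 9 1),
    (Pi.single 1 1, Pi.single 0 1 + Pi.single 9 1),
    (Pi.single 1 1, Pi.single 5 1 + Pi.single 7 1),
    (Pi.single 1 1, Pi.single 4 1 + Pi.single 7 1),
    (Pi.single 1 1, Pi.single 0 1 + Pi.single 7 1),
    (Pi.single 1 1, Pi.single 0 1 + Pi.single 6 1),
    (Pi.single 1 1, Pi.single 1 1 + Pi.single 5 1),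
    (Pi.single 1 1, Pi.single 0 1 + Pi.single 5 1),
    (Pi.single 1 1, Pi.single 0 1 + Pi.single 4 1),
    (Pi.single 1 1, Pi.single 0 1 + Pi.single 2 1),
    (Pi.single 1 1, Pi.single 0 1 + Pi.single 1 1),
    (Pi.single 1 1, Pi.single 0 2),
    (Pi.single 2 1, 0),
    (Pi.single 2 1, Pi.single 9 1),
    (Pi.single 2 1, Pi.single 8 1),
    (Pi.single 2 1, Pi.single 7 1),
    (Pi.single 2 1, Pi.single 2 1),
    (Pi.single 2 1, Pi.single 1 1),
    (Pi.single 2 1, Pi.single 0 1),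
    (Pi.single 2 1, Pi.single 2 1 + Pi.single 9 1),
    (Pi.single 3 1, 0),
    (Pi.single 3 1, Pi.single 5 1),
    (Pi.single 3 1, Pi.single 4 1),
    (Pi.single 3 1, Pi.single 3 1),
    (Pi.single 3 1, Pi.single 2 1),
    (Pi.single 3 1, Pi.single 1 1),
    (Pi.single 3 1, Pi.single 0 1),
    (Pi.single 3 1, Pi.single 1 1 + Pi.single 5 1)]

/-- The cone of pairs (k, p) with nonnegative rational entries satisfying the 70 inequalities. -/
def ConeSet : Set ((Fin 4 → ℚ) × (Fin 12 → ℚ)) :=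
  {x | (∀ i, 0 ≤ x.1 i) ∧ (∀ j, 0 ≤ x.2 j) ∧ SatisfiesIneqs x.1 x.2}

set_option maxHeartbeats 4000000 in
def ineqL : List (List ℤ) := [
  [1,0,0,0,0,0,0,0,0,0,0,0,0,0,0,0],
  [0,1,0,0,0,0,0,0,0,0,0,0,0,0,0,0],
  [0,0,1,0,0,0,0,0,0,0,0,0,0,0,0,0],
  [0,0,0,1,0,0,0,0,0,0,0,0,0,0,0,0],
  [0,0,0,0,1,0,0,0,0,0,0,0,0,0,0,0],
  [0,0,0,0,0,1,0,0,0,0,0,0,0,0,0,0],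
  [0,0,0,0,0,0,1,0,0,0,0,0,0,0,0,0],
  [0,0,0,0,0,0,0,1,0,0,0,0,0,0,0,0],
  [0,0,0,0,0,0,0,0,1,0,0,0,0,0,0,0],
  [0,0,0,0,0,0,0,0,0,1,0,0,0,0,0,0],
  [0,0,0,0,0,0,0,0,0,0,1,0,0,0,0,0],
  [0,0,0,0,0,0,0,0,0,0,0,1,0,0,0,0],
  [0,0,0,0,0,0,0,0,0,0,0,0,1,0,0,0],
  [0,0,0,0,0,0,0,0,0,0,0,0,0,1,0,0],
  [0,0,0,0,0,0,0,0,0,0,0,0,0,0,1,0],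
  [0,0,0,0,0,0,0,0,0,0,0,0,0,0,0,1],
  [1,0,0,0,0,0,0,0,0,0,0,0,0,0,0,-1],
  [0,1,0,0,0,0,0,0,0,0,0,0,0,0,-1,0],
  [0,0,1,0,0,0,0,0,0,0,0,0,-1,0,0,0],
  [0,0,0,1,0,0,0,-1,0,0,0,0,0,0,0,0],
  [1,1,0,0,0,0,0,0,0,0,-1,0,0,0,-1,-1],
  [1,1,1,0,0,0,0,0,0,0,-1,-1,-1,-1,0,-1],
  [1,1,1,0,0,0,0,0,0,0,-1,0,-1,-1,-1,-1],
  [0,1,1,0,0,0,0,0,0,0,0,0,-1,-1,-1,0],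
  [1,1,0,1,0,0,0,-1,-1,-1,-1,0,0,0,0,-1],
  [1,1,0,1,0,0,0,-1,-1,0,-1,0,0,0,-1,-1],
  [0,1,0,1,0,0,0,-1,-1,0,0,0,0,0,-1,0],
  [0,1,1,1,0,-1,0,-1,-1,0,0,0,-1,-1,0,0],
  [0,1,1,1,0,0,0,-1,-1,0,0,0,-1,-1,-1,0],
  [1,1,1,1,0,0,-1,-1,-1,-1,-1,0,-1,0,0,-1],
  [1,1,1,1,0,-1,-1,-1,-1,0,-1,0,-1,0,0,-1],
  [1,1,1,1,0,-1,-1,-1,0,0,-1,-1,-1,0,0,-1],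
  [1,1,1,1,0,-1,0,-1,0,0,-1,-1,-1,-1,0,-1],
  [1,1,1,1,0,0,0,-1,-1,0,-1,0,-1,-1,-1,-1],
  [1,1,1,1,0,-1,0,-1,-1,0,-1,0,-1,-1,0,-1],
  [1,2,1,1,-1,0,-1,-1,-1,-1,-1,-1,-1,0,-1,0],
  [1,2,1,1,-1,-1,-1,-1,-1,0,-1,-1,-1,0,-1,0],
  [1,2,1,1,0,0,-1,-1,-1,-1,-1,-1,-1,0,-1,-1],
  [1,2,1,1,0,-1,-1,-1,-1,0,-1,-1,-1,0,-1,-1],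
  [1,2,1,1,-1,-1,0,-1,-1,0,-1,-1,-1,-1,-1,0],
  [1,2,1,1,0,-1,0,-1,-1,0,-1,-1,-1,-1,-1,-1],
  [1,2,1,1,-1,0,0,-1,-1,-1,-1,-1,-1,-1,-1,0],
  [1,2,1,1,0,0,0,-1,-1,-1,-1,-1,-1,-1,-1,-1],
  [1,2,2,1,0,-1,-1,-1,-1,0,-1,-1,-2,-1,-1,-1],
  [1,2,2,1,0,0,-1,-1,-1,-1,-1,-1,-2,-1,-1,-1],
  [1,2,2,1,-1,-1,-1,-1,-1,0,-1,-1,-2,-1,-1,0],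
  [1,2,2,1,-1,0,-1,-1,-1,-1,-1,-1,-2,-1,-1,0],
  [1,2,2,1,0,-1,0,-1,-1,0,-1,-1,-2,-2,-1,-1],
  [1,2,1,2,0,-1,-1,-2,-1,-1,-1,-1,-1,0,-1,-1],
  [1,2,1,2,0,-1,0,-2,-1,-1,-1,-1,-1,-1,-1,-1],
  [1,2,1,2,-1,-1,-1,-2,-1,-1,-1,-1,-1,0,-1,0],
  [1,2,1,2,-1,-1,0,-2,-1,-1,-1,-1,-1,-1,-1,0],
  [1,2,1,2,0,-1,-1,-2,-2,-1,-1,0,-1,0,-1,-1],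
  [1,2,1,2,0,-1,0,-2,-2,-1,-1,0,-1,-1,-1,-1],
  [2,2,1,1,0,0,-1,-1,-1,-1,-2,-1,-1,0,-1,-2],
  [2,2,1,1,0,0,0,-1,-1,-1,-2,-1,-1,-1,-1,-2],
  [2,2,1,1,0,-1,-1,-1,-1,0,-2,-1,-1,0,-1,-2],
  [2,2,1,1,0,-1,0,-1,-1,0,-2,-1,-1,-1,-1,-2],
  [1,2,2,2,-1,-1,-1,-2,-1,-1,-1,-1,-2,-1,-1,0],
  [1,2,2,2,0,-1,-1,-2,-1,-1,-1,-1,-2,-1,-1,-1],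
  [1,2,2,2,0,-1,-1,-2,-2,-1,-1,0,-2,-1,-1,-1],
  [2,2,1,2,0,-1,-1,-2,-1,-1,-2,-1,-1,0,-1,-2],
  [2,2,1,2,0,-1,0,-2,-1,-1,-2,-1,-1,-1,-1,-2],
  [2,2,1,2,0,-1,-1,-2,-2,-1,-2,0,-1,0,-1,-2],
  [2,2,1,2,0,-1,0,-2,-2,-1,-2,0,-1,-1,-1,-2],
  [2,2,2,1,0,-1,-1,-1,-1,0,-2,-1,-2,-1,-1,-2],
  [2,2,2,1,0,0,-1,-1,-1,-1,-2,-1,-2,-1,-1,-2],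
  [2,2,2,1,0,-1,0,-1,-1,0,-2,-1,-2,-2,-1,-2],
  [2,2,2,2,0,-1,-1,-2,-1,-1,-2,-1,-2,-1,-1,-2],
  [2,2,2,2,0,-1,-1,-2,-2,-1,-2,0,-2,-1,-1,-2],
  [1,3,1,2,0,-1,-1,-2,-2,-1,-1,-1,-1,0,-2,-1],
  [1,3,1,2,0,-1,0,-2,-2,-1,-1,-1,-1,-1,-2,-1],
  [1,3,1,2,-1,-1,-1,-2,-2,-1,-1,-1,-1,0,-2,0],
  [1,3,1,2,-1,-1,0,-2,-2,-1,-1,-1,-1,-1,-2,0],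
  [1,3,2,2,-1,-1,0,-2,-2,-1,-1,-1,-2,-2,-2,0],
  [1,3,2,2,0,-1,0,-2,-2,-1,-1,-1,-2,-2,-2,-1],
  [2,3,1,2,-1,-1,0,-2,-2,-1,-2,-1,-1,-1,-2,-1],
  [2,3,1,2,-1,-1,-1,-2,-2,-1,-2,-1,-1,0,-2,-1],
  [2,3,2,2,-1,-1,0,-2,-2,-1,-2,-1,-2,-2,-2,-1],
  [1,3,3,2,0,-1,-1,-2,-2,-1,-1,-1,-3,-2,-2,-1],
  [1,3,3,2,-1,-1,-1,-2,-2,-1,-1,-1,-3,-2,-2,0],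
  [3,3,1,2,0,-1,-1,-2,-2,-1,-3,-1,-1,0,-2,-3],
  [3,3,1,2,0,-1,0,-2,-2,-1,-3,-1,-1,-1,-2,-3],
  [3,3,3,2,0,-1,-1,-2,-2,-1,-3,-1,-3,-2,-2,-3],
  [2,3,3,2,-1,-1,-1,-2,-2,-1,-2,-1,-3,-2,-2,-1],
  [3,3,2,2,0,-1,0,-2,-2,-1,-3,-1,-2,-2,-2,-3]]

set_option maxHeartbeats 4000000 in
def genL : List (List ℤ) := [
  [1,0,0,0,0,0,0,0,0,0,0,0,0,0,0,0],
  [1,0,0,0,0,0,0,0,0,0,0,0,0,0,0,1],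
  [1,0,0,0,0,0,0,0,0,0,0,1,0,0,0,0],
  [1,0,0,0,0,0,0,0,0,0,1,0,0,0,0,0],
  [1,0,0,0,0,0,0,0,0,1,0,0,0,0,0,0],
  [1,0,0,0,0,0,1,0,0,0,0,0,0,0,0,0],
  [1,0,0,0,1,0,0,0,0,0,0,0,0,0,0,0],
  [1,0,0,0,1,0,0,0,0,0,0,0,0,0,0,1],
  [0,1,0,0,0,0,0,0,0,0,0,0,0,0,0,0],
  [0,1,0,0,0,0,0,0,0,0,0,0,0,0,1,0],
  [0,1,0,0,0,0,0,0,0,0,0,0,0,1,0,0],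
  [0,1,0,0,0,0,0,0,0,0,0,1,0,0,0,0],
  [0,1,0,0,0,0,0,0,0,0,1,0,0,0,0,0],
  [0,1,0,0,0,0,0,0,0,1,0,0,0,0,0,0],
  [0,1,0,0,0,0,0,0,1,0,0,0,0,0,0,0],
  [0,1,0,0,0,0,1,0,0,0,0,0,0,0,0,0],
  [0,1,0,0,0,1,0,0,0,0,0,0,0,0,0,0],
  [0,1,0,0,1,0,0,0,0,0,0,0,0,0,0,0],
  [0,1,0,0,0,0,0,0,0,0,0,1,0,0,1,0],
  [0,1,0,0,0,0,0,0,0,1,0,0,0,0,1,0],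
  [0,1,0,0,0,0,1,0,0,0,0,0,0,0,1,0],
  [0,1,0,0,0,1,0,0,0,0,0,0,0,0,1,0],
  [0,1,0,0,1,0,0,0,0,0,0,0,0,0,1,0],
  [0,1,0,0,0,0,0,0,0,1,0,0,0,1,0,0],
  [0,1,0,0,0,0,1,0,0,0,0,0,0,1,0,0],
  [0,1,0,0,1,0,0,0,0,0,0,0,0,1,0,0],
  [0,1,0,0,0,0,0,0,0,1,0,1,0,0,0,0],
  [0,1,0,0,0,0,0,0,1,0,0,1,0,0,0,0],
  [0,1,0,0,1,0,0,0,0,0,0,1,0,0,0,0],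
  [0,1,0,0,1,0,0,0,0,0,1,0,0,0,0,0],
  [0,1,0,0,0,1,0,0,0,1,0,0,0,0,0,0],
  [0,1,0,0,1,0,0,0,0,1,0,0,0,0,0,0],
  [0,1,0,0,1,0,0,0,1,0,0,0,0,0,0,0],
  [0,1,0,0,1,0,1,0,0,0,0,0,0,0,0,0],
  [0,1,0,0,1,1,0,0,0,0,0,0,0,0,0,0],
  [0,1,0,0,2,0,0,0,0,0,0,0,0,0,0,0],
  [0,0,1,0,0,0,0,0,0,0,0,0,0,0,0,0],
  [0,0,1,0,0,0,0,0,0,0,0,0,0,1,0,0],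
  [0,0,1,0,0,0,0,0,0,0,0,0,1,0,0,0],
  [0,0,1,0,0,0,0,0,0,0,0,1,0,0,0,0],
  [0,0,1,0,0,0,1,0,0,0,0,0,0,0,0,0],
  [0,0,1,0,0,1,0,0,0,0,0,0,0,0,0,0],
  [0,0,1,0,1,0,0,0,0,0,0,0,0,0,0,0],
  [0,0,1,0,0,0,1,0,0,0,0,0,0,1,0,0],
  [0,0,0,1,0,0,0,0,0,0,0,0,0,0,0,0],
  [0,0,0,1,0,0,0,0,0,1,0,0,0,0,0,0],
  [0,0,0,1,0,0,0,0,1,0,0,0,0,0,0,0],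
  [0,0,0,1,0,0,0,1,0,0,0,0,0,0,0,0],
  [0,0,0,1,0,0,1,0,0,0,0,0,0,0,0,0],
  [0,0,0,1,0,1,0,0,0,0,0,0,0,0,0,0],
  [0,0,0,1,1,0,0,0,0,0,0,0,0,0,0,0],
  [0,0,0,1,0,1,0,0,0,1,0,0,0,0,0,0]]

set_option maxHeartbeats 4000000 in
def startL : List (List ℤ) := [
  [0,0,0,0,1,0,0,0,0,0,0,0,0,0,0,0],
  [0,0,0,0,0,1,0,0,0,0,0,0,0,0,0,0],
  [0,0,0,0,0,0,1,0,0,0,0,0,0,0,0,0],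
  [0,0,0,0,0,0,0,1,0,0,0,0,0,0,0,0],
  [0,0,0,0,0,0,0,0,1,0,0,0,0,0,0,0],
  [0,0,0,0,0,0,0,0,0,1,0,0,0,0,0,0],
  [0,0,0,0,0,0,0,0,0,0,1,0,0,0,0,0],
  [0,0,0,0,0,0,0,0,0,0,0,1,0,0,0,0],
  [0,0,0,0,0,0,0,0,0,0,0,0,1,0,0,0],
  [0,0,0,0,0,0,0,0,0,0,0,0,0,1,0,0],
  [0,0,0,0,0,0,0,0,0,0,0,0,0,0,1,0],
  [0,0,0,0,0,0,0,0,0,0,0,0,0,0,0,1],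
  [1,0,0,0,-1,0,0,0,0,0,-1,0,0,0,0,-1],
  [0,1,0,0,0,-1,-1,0,-1,-1,0,0,0,-1,-1,0],
  [0,0,1,0,0,0,0,0,0,0,0,-1,-1,0,0,0],
  [0,0,0,1,0,0,0,-1,0,0,0,0,0,0,0,0]]

-- Order of elimination with certificates: `none` keeps a combination, `some l` writes it
-- (or its double) as the sum of the kept functionals with indices in `l`.
set_option maxHeartbeats 4000000 in
def stages : List (ℕ × List (Option (List ℕ))) := [
  (12, [none, none]),
  (27, [none, none]),
  (5, [none, some [6,14]]),
  (4, [none, some [2,6,14]]),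
  (17, [none, some [2,5,6,13]]),
  (22, [none, none]),
  (7, [some [10,17], none]),
  (50, [some [10,11,17], none]),
  (45, [none, none]),
  (34, [some [10,11,18], none]),
  (19, [some [12,17], none]),
  (48, [none, none]),
  (25, [some [1,11,17], none]),
  (20, [some [12,18], some [5,17]]),
  (24, [none, none]),
  (23, [some [10,12,17], some [2,19]]),
  (30, [none, none]),
  (42, [some [11,18], none, none]),
  (32, [some [11,14,18], some [7,20], some [14,20]]),
  (29, [some [11,13,18], none, none]),
  (33, [some [6,11,13,18], none, some [6,20], some [16,20]]),
  (18, [some [4,13], none, none, none]),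
  (2, [some [4,10,13], none, none, some [10,21], some [10,22]]),
  (11, [some [4,10,13,15], some [6,23], some [15,23], some [10,15,21], some [10,15,22], none]),
  (31, [some [2,6,11,20], none, some [2,6,19], some [2,15,19], some [9,10,12,15,19], some [9,12,23], some [2,23]]),
  (35, [some [1,2,5,6,9,11,12,23], some [2,5,6,19], some [2,5,15,19], some [1,9,10,12,15,19], some [5,9,10,12,15,19], some [1,9,12,23], some [5,9,12,23], some [2,5,23]]),
  (28, [some [6,11,20,22], some [4,10,13,15,19], some [6,19,22], some [15,19,22], some [10,15,19,20], some [10,15,19,21]]),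
  (26, [some [1,20], some [4,13,17], none, none, some [17,20]]),
  (21, [none, none, none, none, none, none]),
  (49, [none, some [10,21], some [10,22], none, none, none, some [10,20], some [10,23], some [10,24]]),
  (41, [some [5,15], some [15,20], some [15,21], some [10,12,20], some [10,12,21], none, none, none, none, none, some [5,10,19], some [10,18,21], some [10,19,21], some [10,20,23], some [10,21,23]]),
  (40, [none, none, some [1,10,18], some [10,12,18], some [10,12,24], some [10,12,25]]),
  (37, [none, none, none, none, some [5,17], some [5,18], some [5,22], some [5,23], some [1,22], some [1,23]]),
  (51, [none, none, none, none, none, none, none, none, none, none, none, none, none, none, none]),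
  (43, [none, none, none, some [21,25], some [21,26], none, some [17,23], some [17,24], some [19,24], some [20,24], none, none, none, none, none, none, none, none, some [22,23], some [22,24], none, some [15,23], some [15,24], some [18,23], some [18,24], none, none, none, none, none, none, none, none, some [22,25], some [22,26], none, some [15,25], some [15,26], some [18,25], some [18,26], none, none, none, none, none]),
  (46, [none, none, none, none, none, none, none, none, none, none, none, none, none, none, none, none, none, none, none, none, none, some [70,72], none, some [71,73], some [70,72], none, some [71,73], none, none, none, some [74,78], some [75,79], none, some [76,77], some [76,80], some [76,81], some [76,77], none, some [76,81], some [77,81], some [74,78], some [75,79], none, none, some [76,80], some [76,81], none, some [80,81], some [76,81], some [77,81], some [80,81], none])]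

/-- Padded addition of functionals. -/
def vadd : List ℤ → List ℤ → List ℤ
  | [], m => m
  | l, [] => l
  | a :: l, b :: m => (a + b) :: vadd l m

def vsmul (c : ℤ) (l : List ℤ) : List ℤ := l.map (c * ·)

def idot : List ℤ → List ℤ → ℤ
  | [], _ => 0
  | _, [] => 0
  | a :: l, b :: m => a * b + idot l m

/-- Evaluation of a functional at a point. -/
def ev : List ℤ → (ℕ → ℚ) → ℚ
  | [], _ => 0
  | a :: l, x => (a : ℚ) * x 0 + ev l (fun n => x (n + 1))

def pt (g : List ℤ) : ℕ → ℚ := fun n => ((g.getD n 0 : ℤ) : ℚ)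

def combos (F : List (List ℤ)) (g : List ℤ) : List (List ℤ) :=
  (F.filter (fun r => decide (0 < idot r g))).flatMap fun r =>
    (F.filter (fun q => decide (idot q g < 0))).map fun q =>
      vadd (vsmul (idot r g) q) (vsmul (-idot q g) r)

def nextF (F : List (List ℤ)) (g : List ℤ) (C : List (Option (List ℕ))) : List (List ℤ) :=
  F.filter (fun f => decide (0 ≤ idot f g)) ++
    (((combos F g).zip C).filter (fun z => z.2.isNone)).map Prod.fst

def certSum (N : List (List ℤ)) (l : List ℕ) : List ℤ :=
  (l.map fun i => N.getD i []).foldr vadd []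

def checkC (N : List (List ℤ)) (z : List ℤ × Option (List ℕ)) : Bool :=
  match z.2 with
  | none => true
  | some l => decide (certSum N l = z.1) || decide (certSum N l = vadd z.1 z.1)

def stepOk (F : List (List ℤ)) (g : List ℤ) (C : List (Option (List ℕ))) : Bool :=
  decide ((combos F g).length = C.length) &&
    ((combos F g).zip C).all (checkC (nextF F g C))

/-- Run the elimination: `none` when a check fails. -/
def runAll : List (List ℤ) → List (ℕ × List (Option (List ℕ))) → Option (List (List ℤ))
  | F, [] => some F
  | F, s :: ss =>
    if stepOk F (genL.getD s.1 []) s.2 && decide (s.1 < 52) then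
      runAll (nextF F (genL.getD s.1 []) s.2) ss else none

lemma ev_vadd : ∀ (l m : List ℤ) (x : ℕ → ℚ), ev (vadd l m) x = ev l x + ev m x
  | [], m, x => by simp [vadd, ev]
  | a :: l, [], x => by simp [vadd, ev]
  | a :: l, b :: m, x => by
    simp only [vadd, ev, ev_vadd l m]; push_cast; ring

lemma ev_vsmul (c : ℤ) : ∀ (l : List ℤ) (x : ℕ → ℚ), ev (vsmul c l) x = c * ev l x
  | [], x => by simp [vsmul, ev]
  | a :: l, x => by
    have := ev_vsmul c l (fun n => x (n + 1))
    simp only [vsmul, List.map_cons, ev] at this ⊢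
    rw [this]; push_cast; ring

lemma ev_lin : ∀ (l : List ℤ) (x y : ℕ → ℚ) (t : ℚ),
    ev l (fun n => x n + t * y n) = ev l x + t * ev l y
  | [], x, y, t => by simp [ev]
  | a :: l, x, y, t => by
    simp only [ev]
    rw [ev_lin l (fun n => x (n + 1)) (fun n => y (n + 1)) t]; ring

lemma ev_zero : ∀ (l : List ℤ), ev l (fun _ => 0) = 0
  | [] => by simp [ev]
  | a :: l => by simp [ev, ev_zero l]

lemma ev_pt : ∀ (l g : List ℤ), ev l (pt g) = idot l g
  | [], g => by simp [ev, idot]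
  | a :: l, [] => by
    have : pt [] = fun _ => 0 := by funext n; simp [pt]
    rw [this, ev_zero]; simp [idot]
  | a :: l, b :: m => by
    have h : (fun n => pt (b :: m) (n + 1)) = pt m := by funext n; simp [pt]
    simp only [ev, idot, h, ev_pt l m]
    simp [pt]

lemma ev_certSum (N : List (List ℤ)) (x : ℕ → ℚ) (hN : ∀ f ∈ N, 0 ≤ ev f x) :
    ∀ l : List ℕ, 0 ≤ ev (certSum N l) x
  | [] => by simp [certSum, ev]
  | i :: l => by
    have ih := ev_certSum N x hN l
    simp only [certSum, List.map_cons, List.foldr_cons, ev_vadd] at ih ⊢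
    refine add_nonneg ?_ ih
    by_cases hi : i < N.length
    · rw [List.getD_eq_getElem _ _ hi]; exact hN _ (List.getElem_mem hi)
    · rw [List.getD_eq_default _ _ (not_lt.mp hi)]; simp [ev]

/-- All pairwise combinations are nonnegative when the kept functionals are. -/
lemma combos_nonneg (F : List (List ℤ)) (g : List ℤ) (C : List (Option (List ℕ)))
    (hok : stepOk F g C = true) (x : ℕ → ℚ) (hx : ∀ f ∈ nextF F g C, 0 ≤ ev f x)
    (h : List ℤ) (hh : h ∈ combos F g) : 0 ≤ ev h x := by
  simp only [stepOk, Bool.and_eq_true, decide_eq_true_eq, List.all_eq_true] at hok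
  obtain ⟨hlen, hall⟩ := hok
  obtain ⟨i, hi, rfl⟩ := List.getElem_of_mem hh
  have hmem : ((combos F g)[i], C[i]'(hlen ▸ hi)) ∈ (combos F g).zip C := by
    rw [List.mem_iff_getElem]
    exact ⟨i, by simp [hi, hlen ▸ hi], by simp⟩
  have hc := hall _ hmem
  generalize (combos F g)[i] = h at *
  generalize C[i]'(hlen ▸ hi) = o at *
  cases o with
  | none =>
    apply hx
    simp only [nextF, List.mem_append, List.mem_map, List.mem_filter]
    exact Or.inr ⟨_, ⟨hmem, rfl⟩, rfl⟩
  | some l =>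
    have hs := ev_certSum _ x hx l
    simp only [checkC, Bool.or_eq_true, decide_eq_true_eq] at hc
    rcases hc with hc | hc
    · rwa [hc] at hs
    · rw [hc, ev_vadd] at hs; linarith

/-- Between finitely many lower and upper bounds that are pairwise compatible there is a number. -/
lemma exists_between_lists (A B : List ℚ) (hB : ∀ b ∈ B, 0 ≤ b)
    (h : ∀ a ∈ A, ∀ b ∈ B, a ≤ b) : ∃ t : ℚ, 0 ≤ t ∧ (∀ a ∈ A, a ≤ t) ∧ ∀ b ∈ B, t ≤ b := by
  induction A with
  | nil => exact ⟨0, le_rfl, by simp, hB⟩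
  | cons a A ih =>
    obtain ⟨t, h0, h1, h2⟩ := ih (fun a' ha' => h a' (List.mem_cons_of_mem _ ha'))
    refine ⟨max a t, le_max_of_le_right h0, ?_, ?_⟩
    · intro a' ha'
      rcases List.mem_cons.mp ha' with rfl | ha'
      · exact le_max_left _ _
      · exact le_max_of_le_right (h1 _ ha')
    · intro b hb
      exact max_le (h a List.mem_cons_self b hb) (h2 b hb)

/-- One Fourier–Motzkin step. -/
lemma step (F : List (List ℤ)) (g : List ℤ) (C : List (Option (List ℕ)))
    (hok : stepOk F g C = true) (x : ℕ → ℚ) (hx : ∀ f ∈ nextF F g C, 0 ≤ ev f x) :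
    ∃ t : ℚ, 0 ≤ t ∧ ∀ f ∈ F, 0 ≤ ev f (fun n => x n + (-t) * pt g n) := by
  have hbase : ∀ f ∈ F, 0 ≤ idot f g → 0 ≤ ev f x := fun f hf h0 => hx f (by
    simp only [nextF, List.mem_append, List.mem_filter, decide_eq_true_eq]
    exact Or.inl ⟨hf, h0⟩)
  obtain ⟨t, h0, h1, h2⟩ := exists_between_lists
    ((F.filter (fun q => decide (idot q g < 0))).map fun q => ev q x / idot q g)
    ((F.filter (fun r => decide (0 < idot r g))).map fun r => ev r x / idot r g)
    (by
      intro b hb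
      simp only [List.mem_map, List.mem_filter, decide_eq_true_eq] at hb
      obtain ⟨r, ⟨hr, hr0⟩, rfl⟩ := hb
      exact div_nonneg (hbase r hr hr0.le) (by exact_mod_cast hr0.le))
    (by
      intro a ha b hb
      simp only [List.mem_map, List.mem_filter, decide_eq_true_eq] at ha hb
      obtain ⟨q, ⟨hq, hq0⟩, rfl⟩ := ha
      obtain ⟨r, ⟨hr, hr0⟩, rfl⟩ := hb
      have hc := combos_nonneg F g C hok x hx
        (vadd (vsmul (idot r g) q) (vsmul (-idot q g) r)) (by
          simp only [combos, List.mem_flatMap, List.mem_map, List.mem_filter, decide_eq_true_eq]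
          exact ⟨r, ⟨hr, hr0⟩, q, ⟨hq, hq0⟩, rfl⟩)
      rw [ev_vadd, ev_vsmul, ev_vsmul] at hc
      push_cast at hc
      have hr1 : (0 : ℚ) < idot r g := by exact_mod_cast hr0
      have hq1 : (idot q g : ℚ) < 0 := by exact_mod_cast hq0
      rw [div_le_iff_of_neg hq1, div_mul_eq_mul_div, div_le_iff₀ hr1]
      linarith)
  refine ⟨t, h0, fun f hf => ?_⟩
  rw [ev_lin, ev_pt]
  rcases lt_trichotomy (idot f g) 0 with hs | hs | hs
  · have := h1 (ev f x / idot f g) (List.mem_map.mpr ⟨f, by simp [hf, hs], rfl⟩)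
    have hq1 : (idot f g : ℚ) < 0 := by exact_mod_cast hs
    rw [div_le_iff_of_neg hq1] at this
    linarith
  · have := hbase f hf hs.ge
    rw [hs]; simpa using this
  · have := h2 (ev f x / idot f g) (List.mem_map.mpr ⟨f, by simp [hf, hs], rfl⟩)
    have hq1 : (0 : ℚ) < idot f g := by exact_mod_cast hs
    rw [le_div_iff₀ hq1] at this
    linarith

/-- Membership in the cone spanned by the generators. -/
def InK (x : ℕ → ℚ) : Prop :=
  ∃ c : Fin 52 → ℚ, (∀ t, 0 ≤ c t) ∧ ∀ n < 16, x n = ∑ t, c t * pt (genL.getD t []) n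

lemma InK_add (x : ℕ → ℚ) (i : ℕ) (hi : i < 52) (t : ℚ) (ht : 0 ≤ t)
    (h : InK (fun n => x n + (-t) * pt (genL.getD i []) n)) : InK x := by
  obtain ⟨c, hc, hx⟩ := h
  refine ⟨c + Pi.single ⟨i, hi⟩ t, fun s => ?_, fun n hn => ?_⟩
  · refine add_nonneg (hc s) ?_
    by_cases hs : s = ⟨i, hi⟩
    · subst hs; simpa using ht
    · simp [Pi.single_eq_of_ne hs]
  · have := hx n hn
    simp only [Pi.add_apply, add_mul, Finset.sum_add_distrib]
    rw [← this, Finset.sum_eq_single (⟨i, hi⟩ : Fin 52)]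
    · simp
    · intro b _ hb; simp [Pi.single_eq_of_ne hb]
    · simp

lemma runAll_sound : ∀ (ss : List (ℕ × List (Option (List ℕ)))) (F N : List (List ℤ)),
    runAll F ss = some N → (∀ x, (∀ f ∈ F, 0 ≤ ev f x) → InK x) →
    ∀ x, (∀ f ∈ N, 0 ≤ ev f x) → InK x
  | [], F, N, h, hF, x, hx => by
    simp only [runAll, Option.some.injEq] at h
    subst h; exact hF x hx
  | s :: ss, F, N, h, hF, x, hx => by
    simp only [runAll] at h
    split_ifs at h with hc
    simp only [Bool.and_eq_true, decide_eq_true_eq] at hc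
    refine runAll_sound ss _ N h (fun y hy => ?_) x hx
    obtain ⟨t, ht, hf⟩ := step F _ _ hc.1 y hy
    exact InK_add y s.1 hc.2 t ht (hF _ hf)

lemma run_check : ((runAll startL stages).map fun N => N.all (fun f => decide (f ∈ ineqL)))
    = some true := by
  decide +kernel

lemma InK_zero (x : ℕ → ℚ) (h : ∀ n < 16, x n = 0) : InK x :=
  ⟨0, fun _ => le_rfl, fun n hn => by simp [h n hn]⟩

lemma start_sound (x : ℕ → ℚ) (hx : ∀ f ∈ startL, 0 ≤ ev f x) : InK x := by
  simp only [startL, List.forall_mem_cons, ev] at hx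
  norm_num at hx
  obtain ⟨h0, h1, h2, h3, h4, h5, h6, h7, h8, h9, h10, h11, h12, h13, h14, h15⟩ := hx
  have g0 : genL.getD 0 [] = [1,0,0,0,0,0,0,0,0,0,0,0,0,0,0,0] := rfl
  have g6 : genL.getD 6 [] = [1,0,0,0,1,0,0,0,0,0,0,0,0,0,0,0] := rfl
  have g3 : genL.getD 3 [] = [1,0,0,0,0,0,0,0,0,0,1,0,0,0,0,0] := rfl
  have g1 : genL.getD 1 [] = [1,0,0,0,0,0,0,0,0,0,0,0,0,0,0,1] := rfl
  have g8 : genL.getD 8 [] = [0,1,0,0,0,0,0,0,0,0,0,0,0,0,0,0] := rfl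
  have g16 : genL.getD 16 [] = [0,1,0,0,0,1,0,0,0,0,0,0,0,0,0,0] := rfl
  have g15 : genL.getD 15 [] = [0,1,0,0,0,0,1,0,0,0,0,0,0,0,0,0] := rfl
  have g14 : genL.getD 14 [] = [0,1,0,0,0,0,0,0,1,0,0,0,0,0,0,0] := rfl
  have g13 : genL.getD 13 [] = [0,1,0,0,0,0,0,0,0,1,0,0,0,0,0,0] := rfl
  have g10 : genL.getD 10 [] = [0,1,0,0,0,0,0,0,0,0,0,0,0,1,0,0] := rfl
  have g9 : genL.getD 9 [] = [0,1,0,0,0,0,0,0,0,0,0,0,0,0,1,0] := rfl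
  have g36 : genL.getD 36 [] = [0,0,1,0,0,0,0,0,0,0,0,0,0,0,0,0] := rfl
  have g39 : genL.getD 39 [] = [0,0,1,0,0,0,0,0,0,0,0,1,0,0,0,0] := rfl
  have g38 : genL.getD 38 [] = [0,0,1,0,0,0,0,0,0,0,0,0,1,0,0,0] := rfl
  have g44 : genL.getD 44 [] = [0,0,0,1,0,0,0,0,0,0,0,0,0,0,0,0] := rfl
  have g47 : genL.getD 47 [] = [0,0,0,1,0,0,0,1,0,0,0,0,0,0,0,0] := rfl
  refine InK_add _ 0 (by norm_num) (x 0 - x 4 - x 10 - x 15) (by linarith) ?_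
  refine InK_add _ 6 (by norm_num) (x 4) (by linarith) ?_
  refine InK_add _ 3 (by norm_num) (x 10) (by linarith) ?_
  refine InK_add _ 1 (by norm_num) (x 15) (by linarith) ?_
  refine InK_add _ 8 (by norm_num) (x 1 - x 5 - x 6 - x 8 - x 9 - x 13 - x 14) (by linarith) ?_
  refine InK_add _ 16 (by norm_num) (x 5) (by linarith) ?_
  refine InK_add _ 15 (by norm_num) (x 6) (by linarith) ?_
  refine InK_add _ 14 (by norm_num) (x 8) (by linarith) ?_
  refine InK_add _ 13 (by norm_num) (x 9) (by linarith) ?_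
  refine InK_add _ 10 (by norm_num) (x 13) (by linarith) ?_
  refine InK_add _ 9 (by norm_num) (x 14) (by linarith) ?_
  refine InK_add _ 36 (by norm_num) (x 2 - x 11 - x 12) (by linarith) ?_
  refine InK_add _ 39 (by norm_num) (x 11) (by linarith) ?_
  refine InK_add _ 38 (by norm_num) (x 12) (by linarith) ?_
  refine InK_add _ 44 (by norm_num) (x 3 - x 7) (by linarith) ?_
  refine InK_add _ 47 (by norm_num) (x 7) (by linarith) ?_
  apply InK_zero
  simp only [g0, g6, g3, g1, g8, g16, g15, g14, g13, g10, g9, g36, g39, g38, g44, g47]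
  intro n hn
  interval_cases n <;> simp [pt] <;> ring

lemma ineq_sound (x : ℕ → ℚ) (hx : ∀ f ∈ ineqL, 0 ≤ ev f x) : InK x := by
  have h := run_check
  rw [Option.map_eq_some_iff] at h
  obtain ⟨N, hN, hall⟩ := h
  simp only [List.all_eq_true, decide_eq_true_eq] at hall
  exact runAll_sound stages startL N hN start_sound x fun f hf => hx f (hall f hf)

def toPt (k : Fin 4 → ℚ) (p : Fin 12 → ℚ) : ℕ → ℚ := fun n =>
  if h : n < 4 then k ⟨n, h⟩ else if h' : n - 4 < 12 then p ⟨n - 4, h'⟩ else 0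

set_option maxHeartbeats 4000000 in
set_option maxRecDepth 100000 in
lemma mem_coneSet_iff (k : Fin 4 → ℚ) (p : Fin 12 → ℚ) :
    (k, p) ∈ ConeSet ↔ ∀ f ∈ ineqL, 0 ≤ ev f (toPt k p) := by
  have e0 : toPt k p 0 = k 0 := rfl
  have e1 : toPt k p 1 = k 1 := rfl
  have e2 : toPt k p 2 = k 2 := rfl
  have e3 : toPt k p 3 = k 3 := rfl
  have f0 : toPt k p 4 = p 0 := rfl
  have f1 : toPt k p 5 = p 1 := rfl
  have f2 : toPt k p 6 = p 2 := rfl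
  have f3 : toPt k p 7 = p 3 := rfl
  have f4 : toPt k p 8 = p 4 := rfl
  have f5 : toPt k p 9 = p 5 := rfl
  have f6 : toPt k p 10 = p 6 := rfl
  have f7 : toPt k p 11 = p 7 := rfl
  have f8 : toPt k p 12 = p 8 := rfl
  have f9 : toPt k p 13 = p 9 := rfl
  have f10 : toPt k p 14 = p 10 := rfl
  have f11 : toPt k p 15 = p 11 := rfl
  generalize toPt k p = x at *
  have hev : ∀ a0 a1 a2 a3 b0 b1 b2 b3 b4 b5 b6 b7 b8 b9 b10 b11 : ℤ,
      ev [a0, a1, a2, a3, b0, b1, b2, b3, b4, b5, b6, b7, b8, b9, b10, b11] x =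
      a0 * k 0 + a1 * k 1 + a2 * k 2 + a3 * k 3 + (b0 * p 0 + b1 * p 1 + b2 * p 2 + b3 * p 3
      + b4 * p 4 + b5 * p 5 + b6 * p 6 + b7 * p 7 + b8 * p 8 + b9 * p 9 + b10 * p 10
      + b11 * p 11) := by
    intros
    simp only [ev, zero_add, Nat.reduceAdd, e0, e1, e2, e3, f0, f1, f2, f3, f4, f5, f6, f7, f8,
      f9, f10, f11]
    ring
  have hA : (k, p) ∈ ConeSet ↔ (0 ≤ k 0 ∧ 0 ≤ k 1 ∧ 0 ≤ k 2 ∧ 0 ≤ k 3) ∧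
      (0 ≤ p 0 ∧ 0 ≤ p 1 ∧ 0 ≤ p 2 ∧ 0 ≤ p 3 ∧ 0 ≤ p 4 ∧ 0 ≤ p 5 ∧ 0 ≤ p 6 ∧ 0 ≤ p 7 ∧
        0 ≤ p 8 ∧ 0 ≤ p 9 ∧ 0 ≤ p 10 ∧ 0 ≤ p 11) ∧ SatisfiesIneqs k p := by
    have h1 : (∀ i, 0 ≤ k i) ↔ (0 ≤ k 0 ∧ 0 ≤ k 1 ∧ 0 ≤ k 2 ∧ 0 ≤ k 3) :=
      ⟨fun h => ⟨h _, h _, h _, h _⟩, fun h i => by fin_cases i <;> simp <;> tauto⟩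
    have h2 : (∀ i, 0 ≤ p i) ↔ (0 ≤ p 0 ∧ 0 ≤ p 1 ∧ 0 ≤ p 2 ∧ 0 ≤ p 3 ∧ 0 ≤ p 4 ∧ 0 ≤ p 5 ∧
        0 ≤ p 6 ∧ 0 ≤ p 7 ∧ 0 ≤ p 8 ∧ 0 ≤ p 9 ∧ 0 ≤ p 10 ∧ 0 ≤ p 11) :=
      ⟨fun h => ⟨h _, h _, h _, h _, h _, h _, h _, h _, h _, h _, h _, h _⟩,
        fun h i => by fin_cases i <;> simp <;> tauto⟩
    rw [← h1, ← h2]; rfl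
  rw [hA]
  clear hA e0 e1 e2 e3 f0 f1 f2 f3 f4 f5 f6 f7 f8 f9 f10 f11
  simp only [SatisfiesIneqs, ineqL, List.forall_mem_cons, hev, and_assoc,
    Int.cast_neg, Int.cast_one, Int.cast_zero, Int.cast_ofNat]
  clear hev
  iterate 85 refine and_congr (by constructor <;> intro h <;> linarith) ?_
  simp only [List.not_mem_nil, false_imp_iff, implies_true, and_true]
  constructor <;> intro h <;> linarith

lemma gens_eq : ∀ t : Fin 52, (∀ i : Fin 4, (gens t).1 i = pt (genL.getD t []) i) ∧
    ∀ j : Fin 12, (gens t).2 j = pt (genL.getD t []) (j + 4) := by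
  decide +kernel

lemma gens_ineq : ∀ t : Fin 52, ∀ f ∈ ineqL, 0 ≤ idot f (genL.getD t []) := by
  decide +kernel

lemma ev_congr : ∀ (l : List ℤ) (x y : ℕ → ℚ), (∀ n < l.length, x n = y n) → ev l x = ev l y
  | [], x, y, _ => rfl
  | a :: l, x, y, h => by
    simp only [ev]
    rw [h 0 (by simp), ev_congr l _ (fun n => y (n + 1)) (fun n hn => h (n + 1) (by simpa using hn))]

lemma ev_sum (l : List ℤ) {ι : Type} (s : Finset ι) (c : ι → ℚ) (y : ι → ℕ → ℚ) :
    ev l (fun n => ∑ t ∈ s, c t * y t n) = ∑ t ∈ s, c t * ev l (y t) := by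
  classical
  induction s using Finset.induction_on with
  | empty => simpa using ev_zero l
  | insert a s ha ih =>
    rw [Finset.sum_insert ha, ← ih, add_comm, ← ev_lin]
    congr 1; funext n; rw [Finset.sum_insert ha, add_comm]

lemma ineqL_length : ∀ f ∈ ineqL, f.length = 16 := by decide

lemma toPt_iff (k : Fin 4 → ℚ) (p : Fin 12 → ℚ) (c : Fin 52 → ℚ) :
    (k, p) = ∑ t, c t • gens t ↔
      ∀ n < 16, toPt k p n = ∑ t, c t * pt (genL.getD t []) n := by
  have h1 : ∀ i, (∑ t, c t • gens t).1 i = ∑ t, c t * pt (genL.getD t []) i := fun i => by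
    simp only [Prod.fst_sum, Finset.sum_apply, Prod.smul_fst, Pi.smul_apply, smul_eq_mul,
      (gens_eq _).1]
  have h2 : ∀ j, (∑ t, c t • gens t).2 j = ∑ t, c t * pt (genL.getD t []) (j + 4) := fun j => by
    simp only [Prod.snd_sum, Finset.sum_apply, Prod.smul_snd, Pi.smul_apply, smul_eq_mul,
      (gens_eq _).2]
  constructor
  · intro h n hn
    by_cases h4 : n < 4
    · rw [← h1 ⟨n, h4⟩, ← h]; simp [toPt, h4]
    · obtain ⟨m, rfl⟩ : ∃ m, n = m + 4 := ⟨n - 4, by omega⟩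
      have hm : m < 12 := by omega
      rw [← h2 ⟨m, hm⟩, ← h]; simp [toPt, hm]
  · intro h
    refine Prod.ext (funext fun i => ?_) (funext fun j => ?_)
    · rw [h1, ← h _ (by omega)]; simp [toPt]
    · rw [h2, ← h _ (by omega)]; simp [toPt]

/-- Proposition 4 of the paper: the cone Σ^f_ℚ spanned by the essential signatures of
fundamental highest weights of D4 is given by the 70 inequalities. -/
theorem coneSet_eq_nonneg_span :
    ConeSet =
      {x | ∃ c : Fin 52 → ℚ, (∀ t, 0 ≤ c t) ∧ x = ∑ t, c t • gens t} := by
  ext ⟨k, p⟩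
  rw [mem_coneSet_iff]
  constructor
  · intro h
    obtain ⟨c, hc, hx⟩ := ineq_sound _ h
    exact ⟨c, hc, (toPt_iff k p c).2 hx⟩
  · rintro ⟨c, hc, hx⟩ f hf
    rw [toPt_iff] at hx
    rw [ev_congr f _ _ (fun n hn => hx n (by rwa [ineqL_length f hf] at hn)), ev_sum]
    refine Finset.sum_nonneg fun t _ => mul_nonneg (hc t) ?_
    rw [ev_pt]
    exact_mod_cast gens_ineq t f hf
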